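/- Let θ be a regular cardinal ≥ ω₂. Then for every function F : [H_θ]^{<ω} → H_θ there exists ξ < ω₁ such that Player II has a winning strategy in the game G₂(θ, F, ξ). -/

import Mathlib

open Set Cardinal Ordinal

noncomputable section

def omega1 : Ordinal.{0} := (aleph 1).ord
def omega2 : Ordinal.{0} := (aleph 2).ord

/-- `[A]^ω`: countably infinite subsets of `A`. -/
def sOmega {α : Type*} (A : Set α) : Set (Set α) :=
  {x | x ⊆ A ∧ x.Countable ∧ x.Infinite}

/-- club subsets of `[A]^ω`. -/
def IsClubOmega {α : Type*} (A : Set α) (C : Set (Set α)) : Prop :=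
  C ⊆ sOmega A ∧ (∀ x ∈ sOmega A, ∃ y ∈ C, x ⊆ y) ∧
    ∀ f : ℕ → Set α, (∀ n, f n ∈ C) → (∀ n, f n ⊆ f (n + 1)) → (⋃ n, f n) ∈ C

/-- stationary subsets of `[A]^ω`. -/
def IsStationaryOmega {α : Type*} (A : Set α) (S : Set (Set α)) : Prop :=
  ∀ C, IsClubOmega A C → (S ∩ C).Nonempty

/-- A ZFC set is a (von Neumann) ordinal iff it is a transitive set of transitive
sets; for such a set, `ZFSet.rank` recovers the corresponding `Ordinal`. -/
def IsOrd (x : ZFSet.{0}) : Prop :=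
  x.IsTransitive ∧ ∀ y ∈ x, ZFSet.IsTransitive y

/-- `H_θ`: the class of sets hereditarily of cardinality `< θ`, i.e. sets whose
transitive closure has cardinality `< θ`. -/
def HSet (θ : Cardinal.{0}) : Set ZFSet.{0} :=
  {x | ∃ t : ZFSet, t.IsTransitive ∧ x.toSet ⊆ t.toSet ∧ #t.toSet < Cardinal.lift.{1} θ}

/-- `y` is closed under the finitary function `F`. -/
def ClosedUnder {α : Type*} (F : Finset α → α) (y : Set α) : Prop :=
  ∀ s : Finset α, ↑s ⊆ y → F s ∈ y

/-- `cl_F(x)`: the smallest superset of `x` closed under `F`. -/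
def clF {α : Type*} (F : Finset α → α) (x : Set α) : Set α :=
  ⋂₀ {y | x ⊆ y ∧ ClosedUnder F y}

/-!
For fixed `ξ` the game is closed for Player II, because `cl_F` is finitary: hence it is
determined. Suppose Player I had a winning strategy `σ_ξ` for every `ξ < ω₁`. A union of `ℵ₁` sets
of size `ℵ₁` has size `ℵ₁`, so Player II can answer all the `σ_ξ` at once, playing
`K n = ⋃ ξ < ω₁, σ_ξ (K 0, …, K (n - 1))`. This single countable run is consistent with every
`σ_ξ`, but iterating the countable closure produces a `ξ < ω₁` with
`cl_F(ξ ∪ {K n : n < ω}) ∩ ω₁ = ξ`, so `σ_ξ` loses.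
-/

section Closure

variable {α : Type*} (F : Finset α → α)

theorem subset_clF (x : Set α) : x ⊆ clF F x :=
  subset_sInter fun _ hy => hy.1

theorem closedUnder_clF (x : Set α) : ClosedUnder F (clF F x) :=
  fun s hs _ hy => hy.2 s (hs.trans (sInter_subset_of_mem hy))

variable {F}

theorem clF_subset {x y : Set α} (hxy : x ⊆ y) (hy : ClosedUnder F y) : clF F x ⊆ y :=
  sInter_subset_of_mem ⟨hxy, hy⟩

theorem ClosedUnder.iUnion_of_directed {ι : Type*} [Nonempty ι] {y : ι → Set α}
    (hdir : Directed (· ⊆ ·) y) (hy : ∀ i, ClosedUnder F (y i)) : ClosedUnder F (⋃ i, y i) := by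
  intro s hs
  obtain ⟨i, hi⟩ := hdir.exists_mem_subset_of_finset_subset_biUnion hs
  exact mem_iUnion_of_mem i (hy i s hi)

variable (F)

theorem clF_mono : Monotone (clF F) :=
  fun _ _ h => clF_subset (h.trans (subset_clF F _)) (closedUnder_clF F _)

theorem clF_iUnion_of_directed {ι : Type*} [Nonempty ι] {x : ι → Set α}
    (hx : Directed (· ⊆ ·) x) : clF F (⋃ i, x i) = ⋃ i, clF F (x i) := by
  have directed : Directed (· ⊆ ·) fun i => clF F (x i) := fun i j =>
    (hx i j).imp fun _ => And.imp (clF_mono F ·) (clF_mono F ·)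
  have closed : ClosedUnder F (⋃ i, clF F (x i)) :=
    .iUnion_of_directed directed fun i => closedUnder_clF F (x i)
  exact (clF_subset (iUnion_mono fun i => subset_clF F (x i)) closed).antisymm
    (iUnion_subset fun i => clF_mono F (subset_iUnion x i))

theorem countable_finset_coe_subset {y : Set α} (hy : y.Countable) :
    {s : Finset α | (s : Set α) ⊆ y}.Countable := by
  refine countable_of_injective_of_countable_image Finset.coe_injective.injOn
    ((countable_ofPred_finite_subset hy).mono ?_)
  rintro _ ⟨s, hs, rfl⟩
  exact ⟨s.finite_toSet, hs⟩

theorem countable_clF {x : Set α} (hx : x.Countable) : (clF F x).Countable := by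
  let step : Set α → Set α := fun y => y ∪ F '' {s | ↑s ⊆ y}
  have countable_step (y : Set α) (hy : y.Countable) : (step y).Countable :=
    hy.union ((countable_finset_coe_subset hy).image F)
  have countable_iterate (n : ℕ) : (step^[n] x).Countable :=
    Function.Iterate.rec Set.Countable hx countable_step n
  have monotone_iterate : Monotone fun n => step^[n] x := monotone_nat_of_le_succ fun n => by
    rw [Function.iterate_succ_apply']
    exact subset_union_left
  refine (countable_iUnion countable_iterate).mono
    (clF_subset (subset_iUnion (fun n => step^[n] x) 0) fun s hs => ?_)
  obtain ⟨n, hn⟩ := monotone_iterate.directed_le.exists_mem_subset_of_finset_subset_biUnion hs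
  refine mem_iUnion_of_mem (n + 1) ?_
  rw [Function.iterate_succ_apply']
  exact Or.inr ⟨s, hn, rfl⟩

end Closure

section CountableOrdinals

theorem countable_Iio_iff_lt_omega_one {o : Ordinal} : (Iio o).Countable ↔ o < ω₁ := by
  rw [← le_aleph0_iff_set_countable, Cardinal.mk_Iio_ordinal, lift_le_aleph0, ← lt_aleph_one_iff,
    ← lt_omega_iff_card_lt]

theorem exists_lt_omega_one_subset_image_Iio {α : Type*} {e : Ordinal → α} {S : Set α}
    (hS : S.Countable) (hSe : S ⊆ e '' Iio ω₁) : ∃ ξ < ω₁, S ⊆ e '' Iio ξ := by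
  have := hS.to_subtype
  choose o ho heo using fun x : S => hSe x.2
  refine ⟨⨆ x, Order.succ (o x), Ordinal.iSup_lt_omega_one fun x =>
    (isSuccLimit_omega 1).succ_lt (ho x), fun x hx => ⟨o ⟨x, hx⟩, ?_, heo ⟨x, hx⟩⟩⟩
  exact Ordinal.lt_iSup_iff.2 ⟨⟨x, hx⟩, Order.lt_succ _⟩

theorem exists_lt_omega_one_clF_inter_subset {α : Type*} (F : Finset α → α) (e : Ordinal → α)
    {X : Set α} (hX : X.Countable) :
    ∃ ξ < ω₁, clF F (e '' Iio ξ ∪ X) ∩ e '' Iio ω₁ ⊆ e '' Iio ξ := by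
  have absorb : ∀ ξ < ω₁, ∃ ζ, ξ ≤ ζ ∧ ζ < ω₁ ∧
      clF F (e '' Iio ξ ∪ X) ∩ e '' Iio ω₁ ⊆ e '' Iio ζ := by
    intro ξ hξ
    have hcount := countable_clF F (((countable_Iio_iff_lt_omega_one.2 hξ).image e).union hX)
    obtain ⟨ζ, hζ, hsub⟩ :=
      exists_lt_omega_one_subset_image_Iio (hcount.mono inter_subset_left) inter_subset_right
    exact ⟨max ξ ζ, le_max_left ξ ζ, max_lt hξ hζ,
      hsub.trans (image_mono (Iio_subset_Iio (le_max_right ξ ζ)))⟩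
  choose! g le_g g_lt subset_g using absorb
  have iterate_lt (n : ℕ) : g^[n] 0 < ω₁ :=
    Function.Iterate.rec (· < ω₁) (omega_pos 1) g_lt n
  have monotone_iterate : Monotone fun n => g^[n] 0 := monotone_nat_of_le_succ fun n => by
    rw [Function.iterate_succ_apply']
    exact le_g _ (iterate_lt n)
  have Iio_iSup : Iio (⨆ n, g^[n] 0) = ⋃ n, Iio (g^[n] 0) := by
    ext o
    simp only [mem_Iio, mem_iUnion, Ordinal.lt_iSup_iff]
  have directed : Directed (· ⊆ ·) fun n => e '' Iio (g^[n] 0) ∪ X :=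
    Monotone.directed_le fun m n hmn =>
      union_subset_union_left X (image_mono (Iio_subset_Iio (monotone_iterate hmn)))
  refine ⟨⨆ n, g^[n] 0, Ordinal.iSup_lt_omega_one iterate_lt, ?_⟩
  rw [Iio_iSup, image_iUnion, iUnion_union, clF_iUnion_of_directed F directed, iUnion_inter]
  refine iUnion_subset fun n => (subset_g _ (iterate_lt n)).trans ?_
  rw [← Function.iterate_succ_apply' g n]
  exact subset_iUnion (fun n => e '' Iio (g^[n] 0)) (n + 1)

end CountableOrdinals

section Game

universe u

variable {α : Type*} (L : Set α) (R : α → α → Prop) (W : Set (Set α)) (X : Set α)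

/-- Player I has a winning strategy in the game of length `ω` in which I plays `J n ∈ L`, II
answers with `K n` such that `R (J n) (K n)`, and II wins if and only if `X ∪ {K n : n < ω} ∈ W`.
A strategy is a function of II's previous moves. The set `X` collects the moves made before the
run starts, so that a position is again a game of the same form. -/
def FirstWins : Prop :=
  ∃ σ : List α → L, ∀ K : ℕ → α,
    (∀ n, R (σ (List.ofFn fun i : Fin n => K i)) (K n)) → X ∪ range K ∉ W

/-- Player II has a winning strategy in the game described at `FirstWins`. A strategy is a function
of I's moves up to and including the current one. -/
def SecondWins : Prop :=
  ∃ τ : List α → α, ∀ J : ℕ → α, (∀ n, J n ∈ L) →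
    ∀ K : ℕ → α, (∀ n, K n = τ (List.ofFn fun i : Fin (n + 1) => J i)) →
      (∀ n, R (J n) (K n)) ∧ X ∪ range K ∈ W

variable {L R W X}

theorem mem_of_not_firstWins (hW : IsLowerSet W) (hL : L.Nonempty) (h : ¬ FirstWins L R W X) :
    X ∈ W := by
  obtain ⟨J, hJ⟩ := hL
  by_contra hX
  exact h ⟨fun _ => ⟨J, hJ⟩, fun K _ hK => hX (hW subset_union_left hK)⟩

theorem exists_not_firstWins_insert {J : α} (hJ : J ∈ L) (h : ¬ FirstWins L R W X) :
    ∃ K, R J K ∧ ¬ FirstWins L R W (insert K X) := by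
  by_contra! hwins
  have : Nonempty L := ⟨⟨J, hJ⟩⟩
  choose! σ hσ using hwins
  -- I opens with `J` and then plays the strategy that wins after II's actual answer.
  refine h ⟨fun l => l.rec ⟨J, hJ⟩ fun K l _ => σ K l, fun K hK => ?_⟩
  have hrange : X ∪ range K = insert (K 0) X ∪ range fun n => K (n + 1) := by
    rw [← Nat.range_of_succ K, insert_union, ← union_insert]
    rfl
  rw [hrange]
  refine hσ (K 0) (by simpa using hK 0) _ fun n => ?_
  simpa only [List.ofFn_succ, Fin.val_zero, Fin.val_succ] using hK (n + 1)

theorem secondWins_of_not_firstWins [Nonempty α] (hW : IsLowerSet W)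
    (hWclosed : ∀ Y : ℕ → Set α, Monotone Y → (∀ n, Y n ∈ W) → ⋃ n, Y n ∈ W)
    (h : ¬ FirstWins L R W X) : SecondWins L R W X := by
  have answer : ∀ Y J, J ∈ L ∧ ¬ FirstWins L R W Y →
      ∃ K, R J K ∧ ¬ FirstWins L R W (insert K Y) :=
    fun Y J hYJ => exists_not_firstWins_insert hYJ.1 hYJ.2
  choose! a ha using answer
  let position (l : List α) : Set α := l.foldl (fun Y J => insert (a Y J) Y) X
  refine ⟨fun l => a (position l.dropLast) (l.getLastD (Classical.arbitrary α)),
    fun J hJ K hK => ?_⟩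
  let Y (n : ℕ) : Set α := position (List.ofFn fun i : Fin n => J i)
  have K_eq (n : ℕ) : K n = a (Y n) (J n) := by
    simp only [hK, List.ofFn_succ_last, List.dropLast_concat, List.getLastD_concat]
    rfl
  have Y_succ (n : ℕ) : Y (n + 1) = insert (K n) (Y n) := by
    simp only [K_eq, Y, position, List.ofFn_succ_last, List.foldl_append]
    rfl
  have not_firstWins (n : ℕ) : ¬ FirstWins L R W (Y n) := by
    induction n with
    | zero => exact h
    | succ n ih => exact Y_succ n ▸ K_eq n ▸ (ha (Y n) (J n) ⟨hJ n, ih⟩).2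
  have monotone_Y : Monotone Y :=
    monotone_nat_of_le_succ fun n => Y_succ n ▸ subset_insert (K n) (Y n)
  have union_subset : X ∪ range K ⊆ ⋃ n, Y n :=
    Set.union_subset (subset_iUnion Y 0) <| range_subset_iff.2 fun n =>
      mem_iUnion_of_mem (n + 1) (Y_succ n ▸ mem_insert (K n) (Y n))
  exact ⟨fun n => K_eq n ▸ (ha (Y n) (J n) ⟨hJ n, not_firstWins n⟩).1,
    hW union_subset <| hWclosed Y monotone_Y fun n =>
      mem_of_not_firstWins hW ⟨J 0, hJ 0⟩ (not_firstWins n)⟩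

theorem exists_run_forall_strategy {ι : Type*} (hR : ∀ J : ι → L, ∃ K, ∀ i, R (J i) K)
    (σ : ι → List α → L) :
    ∃ K : ℕ → α, ∀ i n, R (σ i (List.ofFn fun j : Fin n => K j)) (K n) := by
  choose b hb using hR
  let extend (l : List α) : List α := l ++ [b fun i => σ i l]
  let K (n : ℕ) : α := b fun i => σ i (extend^[n] [])
  have ofFn_K (n : ℕ) : (List.ofFn fun j : Fin n => K j) = extend^[n] [] := by
    induction n with
    | zero => simp
    | succ n ih =>
      rw [List.ofFn_succ_last, Function.iterate_succ_apply', ← ih]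
      simp [K, extend, ← ih]
  exact ⟨K, fun i n => ofFn_K n ▸ hb (fun i => σ i (extend^[n] [])) i⟩

theorem exists_lt_omega_one_secondWins (F : Finset α → α) (e : Ordinal.{u} → α)
    (hR : ∀ J : Iio (ω₁ : Ordinal.{u}) → L, ∃ K, ∀ i, R (J i) K) :
    ∃ ξ < ω₁, SecondWins L R {Y | clF F Y ∩ e '' Iio ω₁ ⊆ e '' Iio ξ} (e '' Iio ξ) := by
  have : Nonempty α := ⟨e 0⟩
  suffices ∃ ξ < ω₁, ¬ FirstWins L R {Y | clF F Y ∩ e '' Iio ω₁ ⊆ e '' Iio ξ} (e '' Iio ξ) by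
    obtain ⟨ξ, hξ, hnot⟩ := this
    refine ⟨ξ, hξ, secondWins_of_not_firstWins
      (fun Y Z hZY hY => (inter_subset_inter_left _ (clF_mono F hZY)).trans hY)
      (fun Y hmono hY => ?_) hnot⟩
    rw [mem_ofPred_eq, clF_iUnion_of_directed F hmono.directed_le, iUnion_inter]
    exact iUnion_subset hY
  by_contra! hwins
  choose σ hσ using fun ξ : Iio ω₁ => hwins ξ ξ.2
  obtain ⟨K, hK⟩ := exists_run_forall_strategy hR σ
  obtain ⟨ξ, hξ, hclosed⟩ := exists_lt_omega_one_clF_inter_subset F e (countable_range K)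
  exact hσ ⟨ξ, hξ⟩ K (hK ⟨ξ, hξ⟩) hclosed

end Game

section ZFSet

theorem toSet_toZFSet (o : Ordinal.{0}) : o.toZFSet.toSet = toZFSet '' Iio o :=
  coe_toZFSet

theorem isOrd_and_countable_iff {x : ZFSet.{0}} :
    IsOrd x ∧ x.toSet.Countable ↔ x ∈ toZFSet '' Iio ω₁ := by
  constructor
  · rintro ⟨hord, hcount⟩
    obtain ⟨o, rfl⟩ := ZFSet.isOrdinal_iff_mem_range_toZFSet.1
      (ZFSet.isOrdinal_iff_forall_mem_isTransitive.2 hord)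
    rw [toSet_toZFSet] at hcount
    exact ⟨o, countable_Iio_iff_lt_omega_one.1
      (countable_of_injective_of_countable_image toZFSet_injective.injOn hcount), rfl⟩
  · rintro ⟨o, ho, rfl⟩
    refine ⟨ZFSet.isOrdinal_iff_forall_mem_isTransitive.1 (ZFSet.isOrdinal_toZFSet o), ?_⟩
    rw [toSet_toZFSet]
    exact (countable_Iio_iff_lt_omega_one.2 ho).image toZFSet

/-- `[A]^κ`: the sets `x ⊆ A` of cardinality `κ`. The cardinality of a `ZFSet.{0}`, taken as a
set of elements of `ZFSet.{0}`, lives one universe up. -/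
def subsetsOfCard (A : Set ZFSet.{0}) (κ : Cardinal.{1}) : Set ZFSet.{0} :=
  {x | x.toSet ⊆ A ∧ #x.toSet = κ}

theorem iUnion_mem_subsetsOfCard {A : Set ZFSet.{0}} {κ : Cardinal.{1}} (hκ : ℵ₀ ≤ κ)
    {ι : Type 1} [Small.{0} ι] [Nonempty ι] (hι : #ι ≤ κ) {f : ι → ZFSet.{0}}
    (hf : ∀ i, f i ∈ subsetsOfCard A κ) : ZFSet.iUnion f ∈ subsetsOfCard A κ := by
  have coe_iUnion : (ZFSet.iUnion f).toSet = ⋃ i, (f i).toSet := ZFSet.coe_iUnion f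
  have mk_le : #(⋃ i, (f i).toSet) ≤ κ := calc
    #(⋃ i, (f i).toSet) ≤ #ι * ⨆ i, #(f i).toSet := mk_iUnion_le _
    _ ≤ κ * κ := mul_le_mul' hι (ciSup_le fun i => (hf i).2.le)
    _ = κ := mul_eq_self hκ
  have le_mk : κ ≤ #(⋃ i, (f i).toSet) := by
    obtain ⟨i⟩ := ‹Nonempty ι›
    exact (hf i).2 ▸ mk_le_mk_of_subset (subset_iUnion (fun i => (f i).toSet) i)
  refine ⟨?_, ?_⟩ <;> rw [coe_iUnion]
  exacts [iUnion_subset fun i => (hf i).1, mk_le.antisymm le_mk]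

end ZFSet

theorem stmt8_general (A : Set ZFSet.{0}) {κ : Cardinal.{1}} (hκ : aleph 1 ≤ κ)
    (F : Finset ZFSet.{0} → ZFSet.{0}) :
    ∃ ξ : ZFSet, IsOrd ξ ∧ ξ.toSet.Countable ∧
      ∃ τ : List ZFSet → ZFSet,
        ∀ J : ℕ → ZFSet, (∀ n, (J n).toSet ⊆ A ∧ #(J n).toSet = κ) →
          ∀ K : ℕ → ZFSet, (∀ n, K n = τ (List.ofFn fun i : Fin (n + 1) => J i)) →
            (∀ n, (K n).toSet ⊆ A ∧ #(K n).toSet = κ ∧ J n ⊆ K n) ∧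
            {z ∈ clF F (ξ.toSet ∪ Set.range K) | IsOrd z ∧ z.toSet.Countable} = ξ.toSet := by
  have : Nonempty (Iio (ω₁ : Ordinal.{0})) := ⟨0, omega_pos 1⟩
  have mk_Iio : #(Iio (ω₁ : Ordinal.{0})) ≤ κ := by simpa [Cardinal.mk_Iio_ordinal] using hκ
  obtain ⟨ξ, hξ, τ, hτ⟩ := exists_lt_omega_one_secondWins (L := subsetsOfCard A κ)
    (R := fun J K => K ∈ subsetsOfCard A κ ∧ J ⊆ K) F toZFSet fun J =>
      ⟨ZFSet.iUnion fun i => (J i).1,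
        fun i => ⟨iUnion_mem_subsetsOfCard ((aleph0_le_aleph 1).trans hκ) mk_Iio fun i => (J i).2,
          ZFSet.subset_iUnion (fun i => (J i).1) i⟩⟩
  obtain ⟨hord, hcount⟩ := isOrd_and_countable_iff.2 (mem_image_of_mem toZFSet hξ)
  refine ⟨ξ.toZFSet, hord, hcount, τ, fun J hJ K hK => ?_⟩
  obtain ⟨hanswers, hclosed⟩ := hτ J hJ K hK
  refine ⟨fun n => ⟨(hanswers n).1.1, (hanswers n).1.2, (hanswers n).2⟩, ?_⟩
  simp only [toSet_toZFSet, isOrd_and_countable_iff]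
  exact Subset.antisymm hclosed (subset_inter (subset_union_left.trans (subset_clF F _))
    (image_mono (Iio_subset_Iio hξ.le)))

/-- In the game `G₂(θ, F, ξ)`, at round `n` Player I plays `J n ∈ [H_θ]^{ω₁}` and
Player II answers with `K n ∈ [H_θ]^{ω₁}`, `K n ⊇ J n` (both coded as ZFC sets).
A strategy for Player II is coded by a function `τ` on finite sequences of I's moves.
Player II wins iff `cl_F(ξ ∪ {K n : n < ω}) ∩ ω₁ = ξ`, expressed here by saying that
the countable von Neumann ordinals in the closure are exactly the elements of `ξ`.
The theorem: for some `ξ < ω₁` (a countable ZFC ordinal) Player II has a winning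
strategy. -/
theorem stmt8 (θ : Cardinal.{0}) (hreg : θ.IsRegular) (hθ : aleph 2 ≤ θ)
    (F : Finset ZFSet.{0} → ZFSet.{0})
    (hF : ∀ s : Finset ZFSet, ↑s ⊆ HSet θ → F s ∈ HSet θ) :
    ∃ ξ : ZFSet, IsOrd ξ ∧ ξ.toSet.Countable ∧
      ∃ τ : List ZFSet → ZFSet,
        ∀ J : ℕ → ZFSet,
          (∀ n, (J n).toSet ⊆ HSet θ ∧ #(J n).toSet = aleph 1) →
          ∀ K : ℕ → ZFSet, (∀ n, K n = τ (List.ofFn fun i : Fin (n + 1) => J i)) →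
            (∀ n, (K n).toSet ⊆ HSet θ ∧ #(K n).toSet = aleph 1 ∧ J n ⊆ K n) ∧
            {z ∈ clF F (ξ.toSet ∪ Set.range K) | IsOrd z ∧ z.toSet.Countable} =
              ξ.toSet :=
  stmt8_general (HSet θ) le_rfl F

end
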